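/- Let Ω ⊆ ℝⁿ be open and bounded, let δ > 0, let c > 0, let 1 ≤ p ≤ ∞ with conjugate exponent p', and let u be smooth on Ω with Δu ≥ 1 on Ω. Suppose that ‖u‖_{L^p(Ω)} · |{y ∈ Ω : |u(y)| ≥ c}|^{1/p'} ≤ c. Then for every x ∈ Ω at distance at least δ from the boundary of Ω, u(x) ≤ (1 + |B_{δ/2}|^{-1}) c − (C_n/8) δ², where |B_{δ/2}| is the Lebesgue measure of a ball of radius δ/2 in ℝⁿ and C_n = (|∂B₁|/|B₁|)(1/(2n) − 1/(2(n+2))). -/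

import Mathlib

open MeasureTheory Metric Set ENNReal

/-- The Laplacian `Δu = Σᵢ ∂²u/∂xᵢ²` of a function `u : ℝⁿ → ℝ`. -/
noncomputable def laplacian {n : ℕ} (u : EuclideanSpace ℝ (Fin n) → ℝ)
    (x : EuclideanSpace ℝ (Fin n)) : ℝ :=
  ∑ i : Fin n,
    fderiv ℝ (fun y => fderiv ℝ u y (EuclideanSpace.single i 1)) x (EuclideanSpace.single i 1)

/-- The Lebesgue measure `|B₁|` of the unit ball in `ℝⁿ`. -/
noncomputable def unitBallVol (n : ℕ) : ℝ :=
  (volume (ball (0 : EuclideanSpace ℝ (Fin n)) 1)).toReal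

/-- The surface measure `|∂B₁|` of the unit sphere in `ℝⁿ`, i.e. `n·|B₁|`. -/
noncomputable def unitSphereArea (n : ℕ) : ℝ := n * unitBallVol n

/-- The constant `Cₙ = (|∂B₁|/|B₁|)(1/(2n) − 1/(2(n+2)))`. -/
noncomputable def Cn (n : ℕ) : ℝ :=
  (unitSphereArea n / unitBallVol n) * (1 / (2 * n) - 1 / (2 * (n + 2)))

/-!
Let `η y = (1 - ‖y‖²) / 2` on the unit ball `B`. Since `∇η y = -y` and `η` vanishes on `∂B`,
integration by parts turns the derivative of `s ↦ ∫_B u (x + s y) dy` into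
`s ∫_B η y Δu (x + s y) dy`, which is at least `s ∫_B η = s |B| / (n + 2)` when `Δu ≥ 1`.
Integrating in `s` gives a mean value inequality with a quadratic gain,
`u x + r² / (2 (n + 2)) ≤ ⨍_{B_r(x)} u`.
The average on the right is at most `c` plus `|B_r|⁻¹ ∫ |u|` over `{|u| ≥ c}`, and Hölder's
inequality bounds the latter integral by `‖u‖_{L^p} |{|u| ≥ c}|^{1/p'} ≤ c`. Finally take
`r = δ / 2` and observe that `Cₙ = 1 / (n + 2)`.
-/

open scoped Laplacian Topology RealInnerProductSpace

section Holder

variable {α : Type*} {_ : MeasurableSpace α} {μ : Measure α} {p q : ℝ≥0∞} {f : α → ℝ} {c : ℝ}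
  {s t : Set α}

lemma eLpNorm_one_le_eLpNorm_mul_rpow_measure_univ {F : Type*} [NormedAddCommGroup F]
    [HolderConjugate p q] {f : α → F} (hf : AEStronglyMeasurable f μ) :
    eLpNorm f 1 μ ≤ eLpNorm f p μ * μ univ ^ q⁻¹.toReal := by
  have hexp : q⁻¹.toReal = 1 / (1 : ℝ≥0∞).toReal - 1 / p.toReal := by
    have h := congrArg ENNReal.toReal (HolderConjugate.inv_add_inv_eq_one p q)
    rw [ENNReal.toReal_add (inv_ne_top.2 (HolderConjugate.ne_zero p q))
      (inv_ne_top.2 (HolderConjugate.ne_zero q p)), ENNReal.toReal_inv p] at h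
    simp only [ENNReal.toReal_one, one_div, inv_one] at h ⊢
    linarith
  rw [hexp]
  exact eLpNorm_le_eLpNorm_mul_rpow_measure_univ (HolderConjugate.one_le p q) hf

lemma setIntegral_le_mul_measureReal_add_setIntegral_abs (hc : 0 ≤ c) (hs : MeasurableSet s)
    (hμs : μ s ≠ ∞) (ht : NullMeasurableSet t μ) (hfs : IntegrableOn f s μ)
    (hft : IntegrableOn f t μ) (hfc : ∀ x ∈ s \ t, f x ≤ c) :
    ∫ x in s, f x ∂μ ≤ c * μ.real s + ∫ x in t, |f x| ∂μ := by
  have hinter : ∫ x in s ∩ t, f x ∂μ ≤ ∫ x in t, |f x| ∂μ :=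
    calc ∫ x in s ∩ t, f x ∂μ ≤ ∫ x in s ∩ t, |f x| ∂μ :=
          integral_mono (hfs.mono_set inter_subset_left)
            (hfs.mono_set inter_subset_left).abs fun x => le_abs_self (f x)
      _ ≤ ∫ x in t, |f x| ∂μ :=
          setIntegral_mono_set hft.abs (Filter.Eventually.of_forall fun x => abs_nonneg (f x))
            inter_subset_right.eventuallyLE
  have hdiff : ∫ x in s \ t, f x ∂μ ≤ c * μ.real s :=
    calc ∫ x in s \ t, f x ∂μ ≤ ∫ _ in s \ t, c ∂μ := by
          refine setIntegral_mono_on₀ (hfs.mono_set sdiff_subset)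
            (integrableOn_const (measure_ne_top_of_subset sdiff_subset hμs))
            (hs.nullMeasurableSet.diff ht) hfc
      _ = c * μ.real (s \ t) := by rw [setIntegral_const, smul_eq_mul, mul_comm]
      _ ≤ c * μ.real s := by gcongr; exact sdiff_subset
  rw [← integral_inter_add_sdiff₀ ht hfs]
  linarith

lemma setAverage_le_of_eLpNorm_mul_measure_superlevel_le [HolderConjugate p q] (hc : 0 ≤ c)
    (hs : MeasurableSet s) (hμs₀ : μ s ≠ 0) (hμs : μ s ≠ ∞) (hst : s ⊆ t) (ht : MeasurableSet t)
    (hfs : IntegrableOn f s μ) (hft : AEStronglyMeasurable f (μ.restrict t))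
    (hsmall : eLpNorm f p (μ.restrict t) * μ {x ∈ t | c ≤ |f x|} ^ q⁻¹.toReal ≤
      ENNReal.ofReal c) :
    ⨍ x in s, f x ∂μ ≤ (1 + (μ.real s)⁻¹) * c := by
  set A := {x ∈ t | c ≤ |f x|}
  have hAt : A ⊆ t := sep_subset t _
  have hA : NullMeasurableSet A μ := by
    rw [← nullMeasurableSet_restrict_of_subset hAt]
    exact (ht.nullMeasurableSet.mono_ac Measure.restrict_le_self.absolutelyContinuous).inter
      (nullMeasurableSet_le aemeasurable_const hft.aemeasurable.abs)
  have hfA : AEStronglyMeasurable f (μ.restrict A) := hft.mono_set hAt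
  have hL1 : eLpNorm f 1 (μ.restrict A) ≤ ENNReal.ofReal c :=
    calc eLpNorm f 1 (μ.restrict A) ≤ eLpNorm f p (μ.restrict A) * μ A ^ q⁻¹.toReal := by
          simpa using eLpNorm_one_le_eLpNorm_mul_rpow_measure_univ (p := p) (q := q) hfA
      _ ≤ eLpNorm f p (μ.restrict t) * μ A ^ q⁻¹.toReal := by gcongr
      _ ≤ ENNReal.ofReal c := hsmall
  have hfA_int : IntegrableOn f A μ :=
    memLp_one_iff_integrable.1 ⟨hfA, hL1.trans_lt ofReal_lt_top⟩
  have hfA_le : ∫ x in A, |f x| ∂μ ≤ c := by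
    rw [← ENNReal.ofReal_le_ofReal_iff hc]
    simpa [← ofReal_integral_norm_eq_lintegral_enorm hfA_int, eLpNorm_one_eq_lintegral_enorm]
      using hL1
  have hfc : ∀ x ∈ s \ A, f x ≤ c := fun x hx =>
    (le_abs_self _).trans (not_le.1 fun h => hx.2 ⟨hst hx.1, h⟩).le
  have hle := setIntegral_le_mul_measureReal_add_setIntegral_abs hc hs hμs hA hfs hfA_int hfc
  have hpos : 0 < μ.real s := toReal_pos hμs₀ hμs
  rw [setAverage_eq, smul_eq_mul]
  calc (μ.real s)⁻¹ * ∫ x in s, f x ∂μ ≤ (μ.real s)⁻¹ * (c * μ.real s + c) := by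
        gcongr; linarith
    _ = (1 + (μ.real s)⁻¹) * c := by field_simp

end Holder

section Cutoff

variable {E F : Type*} [NormedAddCommGroup E] [NormedSpace ℝ E] [FiniteDimensional ℝ E]
  [NormedAddCommGroup F] [NormedSpace ℝ F]

lemma exists_contDiff_hasCompactSupport_eventuallyEq {n : ℕ∞} {f : E → F} {K Ω : Set E}
    (hK : IsCompact K) (hΩ : IsOpen Ω) (hKΩ : K ⊆ Ω) (hf : ContDiffOn ℝ n f Ω) :
    ∃ g : E → F, ContDiff ℝ n g ∧ HasCompactSupport g ∧ g =ᶠ[𝓝ˢ K] f := by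
  obtain ⟨L, hL, hKL, hLΩ⟩ := exists_compact_between hK hΩ hKΩ
  obtain ⟨χ, hχ_one, hχ_zero, -⟩ := exists_contMDiffMap_one_nhds_of_subset_interior
    (modelWithCornersSelf ℝ E) (n := n) hK.isClosed hKL
  have hsupp : tsupport (fun x => χ x • f x) ⊆ L :=
    closure_minimal (fun x hx => by_contra fun hxL => hx (by simp [hχ_zero x hxL])) hL.isClosed
  refine ⟨fun x => χ x • f x, contMDiff_iff_contDiff.1 (contMDiff_of_tsupport fun x hx => ?_),
    HasCompactSupport.of_support_subset_isCompact hL (subset_closure.trans hsupp), ?_⟩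
  · exact (χ.contMDiff.contDiff.contDiffAt.smul
      (hf.contDiffAt (hΩ.mem_nhds (hLΩ (hsupp hx))))).contMDiffAt
  · filter_upwards [hχ_one] with x hx
    rw [hx, one_smul]

end Cutoff

section BallIntegral

lemma integrableOn_ball_of_continuousOn {X F : Type*} [MetricSpace X] [ProperSpace X]
    [MeasurableSpace X] [OpensMeasurableSpace X] {μ : Measure X} [IsFiniteMeasureOnCompacts μ]
    [NormedAddCommGroup F] {f : X → F} {x : X} {r : ℝ} (hf : ContinuousOn f (closedBall x r)) :
    IntegrableOn f (ball x r) μ :=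
  (hf.integrableOn_compact (isCompact_closedBall x r)).mono_set ball_subset_closedBall

variable {E F : Type*} [NormedAddCommGroup E] [NormedSpace ℝ E] [FiniteDimensional ℝ E]
  [MeasurableSpace E] [BorelSpace E] {μ : Measure E} [μ.IsAddHaarMeasure] [NormedAddCommGroup F]
  [NormedSpace ℝ F] {f : E → F}

lemma setAverage_ball_eq_setAverage_unitBall (f : E → F) (x : E) {r : ℝ} (hr : 0 < r) :
    ⨍ y in ball x r, f y ∂μ = ⨍ y in ball 0 1, f (x + r • y) ∂μ := by
  have hpre : (x + ·) ⁻¹' ball x r = ball 0 r := by ext; simp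
  rw [setAverage_eq, setAverage_eq,
    Measure.setIntegral_comp_smul_of_pos μ (fun z => f (x + z)) _ hr, smul_unitBall_of_pos hr,
    ← hpre, (measurePreserving_add_left μ x).setIntegral_preimage_emb
      (measurableEmbedding_addLeft x), measureReal_def, Measure.addHaar_ball_of_pos μ x hr,
    toReal_mul, toReal_ofReal (by positivity), smul_smul, mul_inv_rev]
  rfl

lemma hasDerivAt_integral_unitBall_comp_add_smul (hf : ContDiff ℝ 1 f) (x : E) (s : ℝ) :
    HasDerivAt (fun t => ∫ y in ball 0 1, f (x + t • y) ∂μ)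
      (∫ y in ball 0 1, fderiv ℝ f (x + s • y) y ∂μ) s := by
  have hf_cont : Continuous f := hf.continuous
  have : Continuous (fderiv ℝ f) := hf.continuous_fderiv one_ne_zero
  obtain ⟨C, hC⟩ := ((isCompact_closedBall s 1).prod (isCompact_closedBall (0 : E) 1)
    ).exists_bound_of_continuousOn (f := fun z : ℝ × E => fderiv ℝ f (x + z.1 • z.2) z.2)
      (by fun_prop)
  have hderiv (t : ℝ) (y : E) :
      HasDerivAt (fun t => f (x + t • y)) (fderiv ℝ f (x + t • y) y) t := by
    have hline : HasDerivAt (fun t : ℝ => x + t • y) y t := by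
      simpa using ((hasDerivAt_id t).smul_const y).const_add x
    exact ((hf.differentiable one_ne_zero) _).hasFDerivAt.comp_hasDerivAt t hline
  refine (hasDerivAt_integral_of_dominated_loc_of_deriv_le (bound := fun _ => C)
    (closedBall_mem_nhds s one_pos) (.of_forall fun t => ?_) ?_ ?_ ?_ ?_
    (.of_forall fun y t _ => hderiv t y)).2
  · exact (integrableOn_ball_of_continuousOn (by fun_prop)).aestronglyMeasurable
  · exact integrableOn_ball_of_continuousOn (by fun_prop)
  · exact (integrableOn_ball_of_continuousOn (by fun_prop)).aestronglyMeasurable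
  · filter_upwards [ae_restrict_mem measurableSet_ball] with y hy t ht
    exact hC (t, y) ⟨ht, ball_subset_closedBall hy⟩
  · exact integrableOn_ball_of_continuousOn continuousOn_const

end BallIntegral

section Dilation

variable {E F : Type*} [NormedAddCommGroup E] [NormedSpace ℝ E] [NormedAddCommGroup F]
  [NormedSpace ℝ F]

lemma fderiv_comp_add_smul (f : E → F) (a : E) (s : ℝ) (y : E) :
    fderiv ℝ (fun z => f (a + s • z)) y = s • fderiv ℝ f (a + s • y) := by
  rw [fderiv_comp_smul (f := fun w => f (a + w)), fderiv_comp_add_left]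

end Dilation

section Laplacian

variable {E F : Type*} [NormedAddCommGroup E] [InnerProductSpace ℝ E] [FiniteDimensional ℝ E]
  [NormedAddCommGroup F] [NormedSpace ℝ F] {f : E → F} {x : E}

lemma laplacian_eq_sum_fderiv_fderiv_apply {ι : Type*} [Fintype ι] (b : OrthonormalBasis ι ℝ E)
    (hf : ContDiffAt ℝ 2 f x) :
    Δ f x = ∑ i, fderiv ℝ (fun y => fderiv ℝ f y (b i)) x (b i) := by
  have hf' : DifferentiableAt ℝ (fderiv ℝ f) x :=
    (hf.fderiv_right (m := 1) (by norm_num)).differentiableAt one_ne_zero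
  rw [InnerProductSpace.laplacian_eq_iteratedFDeriv_orthonormalBasis f b]
  refine Finset.sum_congr rfl fun i _ => ?_
  rw [iteratedFDeriv_two_apply, fderiv_clm_apply hf' (differentiableAt_const _)]
  simp

lemma continuous_laplacian (hf : ContDiff ℝ 2 f) : Continuous (Δ f) := by
  rw [InnerProductSpace.laplacian_eq_iteratedFDeriv_stdOrthonormalBasis]
  have : Continuous (iteratedFDeriv ℝ 2 f) := hf.continuous_iteratedFDeriv le_rfl
  fun_prop

lemma laplacian_comp_add_smul (hf : ContDiff ℝ 2 f) (a : E) (s : ℝ) (y : E) :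
    Δ (fun z => f (a + s • z)) y = s ^ 2 • Δ f (a + s • y) := by
  let b := stdOrthonormalBasis ℝ E
  rw [laplacian_eq_sum_fderiv_fderiv_apply b (by fun_prop),
    laplacian_eq_sum_fderiv_fderiv_apply b hf.contDiffAt, Finset.smul_sum]
  refine Finset.sum_congr rfl fun i _ => ?_
  have hdiff : DifferentiableAt ℝ (fun z => fderiv ℝ f (a + s • z) (b i)) y :=
    (((hf.fderiv_right (m := 1) (by norm_num)).differentiable one_ne_zero).comp
      (by fun_prop : Differentiable ℝ fun z => a + s • z)).clm_apply (differentiable_const _) y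
  simp_rw [fderiv_comp_add_smul, smul_apply]
  rw [fderiv_fun_const_smul hdiff, fderiv_comp_add_smul fun z => fderiv ℝ f z (b i), smul_apply,
    smul_apply, sq, mul_smul]

end Laplacian

section Torsion

section Norm

variable {E : Type*} [NormedAddCommGroup E]

/-- The torsion function of the unit ball up to a factor `dim E`, that is, the function with
`∇η y = -y` in the ball and `η = 0` on its boundary, extended by zero. Truncating the norm makes it
Lipschitz on the whole space, so that integrating by parts against it leaves no boundary term. -/
noncomputable def ballTorsion (y : E) : ℝ := (1 - min ‖y‖ 1 ^ 2) / 2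

lemma ballTorsion_of_norm_le_one {y : E} (hy : ‖y‖ ≤ 1) : ballTorsion y = (1 - ‖y‖ ^ 2) / 2 := by
  rw [ballTorsion, min_eq_left hy]

lemma ballTorsion_of_one_le_norm {y : E} (hy : 1 ≤ ‖y‖) : ballTorsion y = 0 := by
  simp [ballTorsion, min_eq_right hy]

lemma ballTorsion_nonneg (y : E) : 0 ≤ ballTorsion y := by
  have hmin : min ‖y‖ 1 ^ 2 ≤ 1 := pow_le_one₀ (by positivity) (min_le_right _ _)
  rw [ballTorsion]
  linarith

lemma lipschitzWith_ballTorsion : LipschitzWith 1 (ballTorsion (E := E)) := by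
  refine LipschitzWith.of_dist_le_mul fun y z => ?_
  have hmin : |min ‖z‖ 1 - min ‖y‖ 1| ≤ dist y z := by
    refine (abs_min_sub_min_le_max _ _ _ _).trans (max_le ?_ (by simp))
    rw [dist_comm, dist_eq_norm]
    exact abs_norm_sub_norm_le z y
  have hsum : |min ‖z‖ 1 + min ‖y‖ 1| ≤ 2 := by
    rw [abs_of_nonneg (by positivity)]
    linarith [min_le_right ‖z‖ 1, min_le_right ‖y‖ 1]
  calc dist (ballTorsion y) (ballTorsion z)
      = |min ‖z‖ 1 - min ‖y‖ 1| * |min ‖z‖ 1 + min ‖y‖ 1| / 2 := by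
        rw [Real.dist_eq, ballTorsion, ballTorsion, ← abs_mul, ← abs_two (α := ℝ), ← abs_div,
          abs_two]
        ring_nf
    _ ≤ dist y z * 2 / 2 := by gcongr
    _ = (1 : NNReal) * dist y z := by simp

lemma hasFDerivAt_ballTorsion_of_one_lt_norm [NormedSpace ℝ E] {y : E} (hy : 1 < ‖y‖) :
    HasFDerivAt ballTorsion (0 : E →L[ℝ] ℝ) y := by
  refine (hasFDerivAt_const (0 : ℝ) y).congr_of_eventuallyEq ?_
  filter_upwards [(isOpen_lt continuous_const continuous_norm).mem_nhds hy] with z hz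
  exact ballTorsion_of_one_le_norm (le_of_lt hz)

end Norm

variable {E : Type*} [NormedAddCommGroup E] [InnerProductSpace ℝ E]

lemma hasFDerivAt_ballTorsion_of_norm_lt_one {y : E} (hy : ‖y‖ < 1) :
    HasFDerivAt ballTorsion (-innerSL ℝ y) y := by
  have hquad : HasFDerivAt (fun z : E => (1 - ‖z‖ ^ 2) / 2) (-innerSL ℝ y) y := by
    convert! ((hasStrictFDerivAt_norm_sq y).hasFDerivAt.const_sub 1).mul_const (2 : ℝ)⁻¹ using 1
    ext; simp
  refine hquad.congr_of_eventuallyEq ?_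
  filter_upwards [(isOpen_lt continuous_norm continuous_const).mem_nhds hy] with z hz
  exact ballTorsion_of_norm_le_one (le_of_lt hz)

variable [FiniteDimensional ℝ E] [MeasurableSpace E] [BorelSpace E] {μ : Measure E}
  [μ.IsAddHaarMeasure]

lemma lineDeriv_ballTorsion_ae_eq (v : E) :
    (fun y => lineDeriv ℝ ballTorsion y v) =ᵐ[μ] (ball 0 1).indicator fun y => -⟪y, v⟫ := by
  filter_upwards [measure_eq_zero_iff_ae_notMem.1
    (Measure.addHaar_sphere_of_ne_zero μ (0 : E) one_ne_zero)] with y hy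
  rcases lt_or_gt_of_ne (mem_sphere_zero_iff_norm.not.1 hy) with hin | hout
  · rw [indicator_of_mem (mem_ball_zero_iff.2 hin),
      ((hasFDerivAt_ballTorsion_of_norm_lt_one hin).hasLineDerivAt v).lineDeriv]
    simp
  · rw [indicator_of_notMem (mem_ball_zero_iff.not.2 hout.le.not_gt),
      ((hasFDerivAt_ballTorsion_of_one_lt_norm hout).hasLineDerivAt v).lineDeriv]
    simp

lemma integral_unitBall_inner_mul_eq {g : E → ℝ} (hg : ContDiff ℝ 1 g) (v : E) :
    ∫ y in ball 0 1, ⟪y, v⟫ * g y ∂μ = ∫ y in ball 0 1, ballTorsion y * fderiv ℝ g y v ∂μ := by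
  obtain ⟨h, hh, hh_supp, hhg⟩ := exists_contDiff_hasCompactSupport_eventuallyEq (n := 1)
    (isCompact_closedBall (0 : E) 1) isOpen_univ (subset_univ _) hg.contDiffOn
  have hhg_nhds {y : E} (hy : y ∈ ball 0 1) : h =ᶠ[𝓝 y] g :=
    eventually_nhdsSet_iff_forall.1 hhg y (ball_subset_closedBall hy)
  obtain ⟨D, hD⟩ := hh.lipschitzWith_of_hasCompactSupport hh_supp one_ne_zero
  have hleft : ∫ y, lineDeriv ℝ ballTorsion y v * h y ∂μ = -∫ y in ball 0 1, ⟪y, v⟫ * g y ∂μ := by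
    rw [← integral_neg, ← integral_indicator measurableSet_ball]
    refine integral_congr_ae ?_
    filter_upwards [lineDeriv_ballTorsion_ae_eq v] with y hy
    rw [hy]
    by_cases hball : y ∈ ball 0 1
    · simp [hball, (hhg_nhds hball).eq_of_nhds]
    · simp [hball]
  have hright : ∫ y, lineDeriv ℝ h y (-v) * ballTorsion y ∂μ =
      -∫ y in ball 0 1, ballTorsion y * fderiv ℝ g y v ∂μ := by
    rw [← integral_neg, ← integral_indicator measurableSet_ball]
    congr 1 with y
    rw [((hh.differentiable one_ne_zero) y).lineDeriv_eq_fderiv]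
    by_cases hball : y ∈ ball 0 1
    · simp [hball, (hhg_nhds hball).fderiv_eq, mul_comm]
    · rw [indicator_of_notMem hball, ballTorsion_of_one_le_norm (by simpa using hball), mul_zero]
  rw [← neg_inj, ← hleft, ← hright]
  exact lipschitzWith_ballTorsion.integral_lineDeriv_mul_eq hD hh_supp v

lemma integral_unitBall_ballTorsion :
    ∫ y in ball (0 : E) 1, ballTorsion y ∂μ =
      μ.real (ball (0 : E) 1) / (Module.finrank ℝ E + 2) := by
  let b := stdOrthonormalBasis ℝ E
  have hnormSq : ∫ y in ball (0 : E) 1, ‖y‖ ^ 2 ∂μ =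
      Module.finrank ℝ E * ∫ y in ball (0 : E) 1, ballTorsion y ∂μ := by
    have hcoord (i) : ∫ y in ball (0 : E) 1, ⟪y, b i⟫ ^ 2 ∂μ =
        ∫ y in ball (0 : E) 1, ballTorsion y ∂μ := by
      have hfderiv (y : E) : fderiv ℝ (fun z => ⟪z, b i⟫) y (b i) = 1 := by
        simp [fderiv_inner_apply]
      have hinner : ContDiff ℝ 1 fun y => ⟪y, b i⟫ := contDiff_id.inner ℝ contDiff_const
      simpa [sq, hfderiv] using integral_unitBall_inner_mul_eq (μ := μ) hinner (b i)
    simp_rw [← b.sum_sq_inner_left]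
    rw [integral_finsetSum _ fun i _ => integrableOn_ball_of_continuousOn (by fun_prop)]
    simp [hcoord]
  have htorsion : ∫ y in ball (0 : E) 1, ballTorsion y ∂μ =
      (μ.real (ball (0 : E) 1) - ∫ y in ball (0 : E) 1, ‖y‖ ^ 2 ∂μ) / 2 :=
    calc ∫ y in ball (0 : E) 1, ballTorsion y ∂μ
        = ∫ y in ball (0 : E) 1, (1 - ‖y‖ ^ 2) / 2 ∂μ :=
          setIntegral_congr_fun measurableSet_ball fun y hy =>
            ballTorsion_of_norm_le_one (mem_ball_zero_iff.1 hy).le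
      _ = (μ.real (ball (0 : E) 1) - ∫ y in ball (0 : E) 1, ‖y‖ ^ 2 ∂μ) / 2 := by
          rw [integral_div, integral_sub (integrableOn_ball_of_continuousOn continuousOn_const)
            (integrableOn_ball_of_continuousOn (by fun_prop))]
          simp
  rw [hnormSq] at htorsion
  field_simp
  linarith

lemma integral_unitBall_fderiv_apply_self {f : E → ℝ} (hf : ContDiff ℝ 2 f) :
    ∫ y in ball 0 1, fderiv ℝ f y y ∂μ = ∫ y in ball 0 1, ballTorsion y * Δ f y ∂μ := by
  let b := stdOrthonormalBasis ℝ E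
  have hg (i) : ContDiff ℝ 1 fun y => fderiv ℝ f y (b i) :=
    (hf.fderiv_right (m := 1) (by norm_num)).clm_apply contDiff_const
  have hg' (i) : Continuous fun y => fderiv ℝ (fun z => fderiv ℝ f z (b i)) y (b i) :=
    ((hg i).continuous_fderiv one_ne_zero).clm_apply continuous_const
  have hη : Continuous (ballTorsion (E := E)) := lipschitzWith_ballTorsion.continuous
  have hexpand (y : E) : fderiv ℝ f y y = ∑ i, ⟪y, b i⟫ * fderiv ℝ f y (b i) := by
    have h := congrArg (fderiv ℝ f y) (b.sum_repr' y)
    simpa [real_inner_comm] using h.symm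
  calc ∫ y in ball 0 1, fderiv ℝ f y y ∂μ
      = ∑ i, ∫ y in ball 0 1, ⟪y, b i⟫ * fderiv ℝ f y (b i) ∂μ := by
        simp_rw [hexpand]
        exact integral_finsetSum _ fun i _ => integrableOn_ball_of_continuousOn
          (.mul (by fun_prop) (hg i).continuous.continuousOn)
    _ = ∑ i, ∫ y in ball 0 1,
          ballTorsion y * fderiv ℝ (fun z => fderiv ℝ f z (b i)) y (b i) ∂μ :=
        Finset.sum_congr rfl fun i _ => integral_unitBall_inner_mul_eq (hg i) (b i)
    _ = ∫ y in ball 0 1, ballTorsion y * Δ f y ∂μ := by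
        simp_rw [laplacian_eq_sum_fderiv_fderiv_apply b hf.contDiffAt, Finset.mul_sum]
        exact (integral_finsetSum _ fun i _ =>
          integrableOn_ball_of_continuousOn (hη.mul (hg' i)).continuousOn).symm

end Torsion

section MeanValue

variable {E : Type*} [NormedAddCommGroup E] [InnerProductSpace ℝ E] [FiniteDimensional ℝ E]
  [MeasurableSpace E] [BorelSpace E] {μ : Measure E} [μ.IsAddHaarMeasure] {f : E → ℝ} {x : E}
  {m r : ℝ}

lemma le_integral_unitBall_fderiv_of_le_laplacian (hf : ContDiff ℝ 2 f) (hr : 0 < r)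
    (hm : ∀ y ∈ ball x r, m ≤ Δ f y) :
    m * r * (μ.real (ball (0 : E) 1) / (Module.finrank ℝ E + 2)) ≤
      ∫ y in ball 0 1, fderiv ℝ f (x + r • y) y ∂μ := by
  have hη : Continuous (ballTorsion (E := E)) := lipschitzWith_ballTorsion.continuous
  have hΔ : Continuous (Δ f) := continuous_laplacian hf
  have hgreen : r * ∫ y in ball 0 1, fderiv ℝ f (x + r • y) y ∂μ =
      r ^ 2 * ∫ y in ball 0 1, ballTorsion y * Δ f (x + r • y) ∂μ := by
    have h := integral_unitBall_fderiv_apply_self (μ := μ) (f := fun z => f (x + r • z))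
      (by fun_prop)
    simp_rw [laplacian_comp_add_smul hf, fderiv_comp_add_smul, smul_apply, smul_eq_mul,
      mul_left_comm (ballTorsion _), integral_const_mul] at h
    exact h
  have htorsion : m * (μ.real (ball (0 : E) 1) / (Module.finrank ℝ E + 2)) ≤
      ∫ y in ball 0 1, ballTorsion y * Δ f (x + r • y) ∂μ := by
    rw [← integral_unitBall_ballTorsion, mul_comm, ← integral_mul_const]
    refine setIntegral_mono_on (integrableOn_ball_of_continuousOn (by fun_prop))
      (integrableOn_ball_of_continuousOn (by fun_prop)) measurableSet_ball fun y hy => ?_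
    refine mul_le_mul_of_nonneg_left (hm _ ?_) (ballTorsion_nonneg y)
    simpa [norm_smul, abs_of_pos hr] using mul_lt_of_lt_one_right hr (mem_ball_zero_iff.1 hy)
  refine le_of_mul_le_mul_left ?_ hr
  calc r * (m * r * (μ.real (ball (0 : E) 1) / (Module.finrank ℝ E + 2)))
      = r ^ 2 * (m * (μ.real (ball (0 : E) 1) / (Module.finrank ℝ E + 2))) := by ring
    _ ≤ r ^ 2 * ∫ y in ball 0 1, ballTorsion y * Δ f (x + r • y) ∂μ := by gcongr
    _ = r * ∫ y in ball 0 1, fderiv ℝ f (x + r • y) y ∂μ := hgreen.symm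

lemma add_le_setAverage_unitBall_of_le_laplacian (hf : ContDiff ℝ 2 f) (hr : 0 ≤ r)
    (hm : ∀ y ∈ ball x r, m ≤ Δ f y) :
    f x + m / (2 * (Module.finrank ℝ E + 2)) * r ^ 2 ≤ ⨍ y in ball 0 1, f (x + r • y) ∂μ := by
  set V := μ.real (ball (0 : E) 1)
  have hV : 0 < V := toReal_pos (measure_ball_pos μ 0 one_pos).ne' measure_ball_lt_top.ne
  set k := m / (2 * (Module.finrank ℝ E + 2)) * V
  have hderiv (s : ℝ) :
      HasDerivAt (fun s => ∫ y in ball 0 1, f (x + s • y) ∂μ - k * s ^ 2)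
        (∫ y in ball 0 1, fderiv ℝ f (x + s • y) y ∂μ - k * (2 * s)) s :=
    (hasDerivAt_integral_unitBall_comp_add_smul (hf.of_le one_le_two) x s).sub
      (by simpa using (hasDerivAt_pow 2 s).const_mul k)
  have hmono : MonotoneOn (fun s => ∫ y in ball 0 1, f (x + s • y) ∂μ - k * s ^ 2) (Icc 0 r) := by
    refine monotoneOn_of_deriv_nonneg (convex_Icc 0 r)
      (fun s _ => (hderiv s).continuousAt.continuousWithinAt)
      (fun s _ => (hderiv s).differentiableAt.differentiableWithinAt) fun s hs => ?_
    rw [interior_Icc] at hs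
    have hle := le_integral_unitBall_fderiv_of_le_laplacian (μ := μ) hf hs.1
      fun y hy => hm y (ball_subset_ball hs.2.le hy)
    rw [(hderiv s).deriv, sub_nonneg]
    exact hle.trans_eq' (by simp only [k, V]; field_simp)
  have h0r := hmono (left_mem_Icc.2 hr) (right_mem_Icc.2 hr) hr
  rw [setAverage_eq, smul_eq_mul, ← div_eq_inv_mul, le_div_iff₀ hV]
  simp only [zero_smul, add_zero, setIntegral_const, smul_eq_mul] at h0r
  linarith

theorem add_le_setAverage_ball_of_le_laplacian {Ω : Set E} (hΩ : IsOpen Ω)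
    (hf : ContDiffOn ℝ 2 f Ω) (hr : 0 < r) (hball : closedBall x r ⊆ Ω)
    (hm : ∀ y ∈ ball x r, m ≤ Δ f y) :
    f x + m / (2 * (Module.finrank ℝ E + 2)) * r ^ 2 ≤ ⨍ y in ball x r, f y ∂μ := by
  obtain ⟨g, hg, -, hgf⟩ := exists_contDiff_hasCompactSupport_eventuallyEq (n := 2)
    (isCompact_closedBall x r) hΩ hball hf
  have hgf_nhds {y : E} (hy : y ∈ ball x r) : g =ᶠ[𝓝 y] f :=
    eventually_nhdsSet_iff_forall.1 hgf y (ball_subset_closedBall hy)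
  have hg_lap : ∀ y ∈ ball x r, m ≤ Δ g y := fun y hy =>
    (hm y hy).trans_eq (InnerProductSpace.laplacian_congr_nhds (hgf_nhds hy)).eq_of_nhds.symm
  calc f x + m / (2 * (Module.finrank ℝ E + 2)) * r ^ 2
      = g x + m / (2 * (Module.finrank ℝ E + 2)) * r ^ 2 := by
        rw [(hgf_nhds (mem_ball_self hr)).eq_of_nhds]
    _ ≤ ⨍ y in ball 0 1, g (x + r • y) ∂μ :=
        add_le_setAverage_unitBall_of_le_laplacian hg hr.le hg_lap
    _ = ⨍ y in ball x r, g y ∂μ := (setAverage_ball_eq_setAverage_unitBall g x hr).symm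
    _ = ⨍ y in ball x r, f y ∂μ :=
        setAverage_congr_fun measurableSet_ball (.of_forall fun y hy => (hgf_nhds hy).eq_of_nhds)

end MeanValue

theorem pointwise_bound_from_small_product_general {E : Type*} [NormedAddCommGroup E]
    [InnerProductSpace ℝ E] [FiniteDimensional ℝ E] [MeasurableSpace E] [BorelSpace E]
    {μ : Measure E} [μ.IsAddHaarMeasure] {Ω : Set E} (hΩ : IsOpen Ω) {r c m : ℝ} (hr : 0 < r)
    (hc : 0 ≤ c) {p q : ℝ≥0∞} [HolderConjugate p q] {u : E → ℝ} (hu : ContDiffOn ℝ 2 u Ω)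
    (hlap : ∀ y ∈ Ω, m ≤ Δ u y)
    (hsmall : eLpNorm u p (μ.restrict Ω) * μ {y ∈ Ω | c ≤ |u y|} ^ q⁻¹.toReal ≤ ENNReal.ofReal c)
    {x : E} (hx : closedBall x r ⊆ Ω) :
    u x ≤ (1 + (μ.real (ball (0 : E) r))⁻¹) * c -
      m / (2 * (Module.finrank ℝ E + 2)) * r ^ 2 := by
  have hball : ball x r ⊆ Ω := ball_subset_closedBall.trans hx
  have hmean := add_le_setAverage_ball_of_le_laplacian (μ := μ) hΩ hu hr hx
    fun y hy => hlap y (hball hy)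
  have hint : IntegrableOn u (ball x r) μ :=
    integrableOn_ball_of_continuousOn (hu.continuousOn.mono hx)
  have haverage := setAverage_le_of_eLpNorm_mul_measure_superlevel_le hc measurableSet_ball
    (measure_ball_pos μ x hr).ne' measure_ball_lt_top.ne hball hΩ.measurableSet hint
    (hu.continuousOn.aestronglyMeasurable hΩ.measurableSet) hsmall
  rw [Measure.addHaar_real_ball_center μ x r] at haverage
  linarith

lemma laplacian_eq_laplacian_euclideanSpace {n : ℕ} {u : EuclideanSpace ℝ (Fin n) → ℝ}
    {x : EuclideanSpace ℝ (Fin n)} (hu : ContDiffAt ℝ 2 u x) : laplacian u x = Δ u x := by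
  simp [laplacian_eq_sum_fderiv_fderiv_apply (EuclideanSpace.basisFun (Fin n) ℝ) hu, laplacian]

lemma Cn_eq_one_div {n : ℕ} (hn : 0 < n) : Cn n = 1 / (n + 2) := by
  have hvol : 0 < unitBallVol n :=
    toReal_pos (measure_ball_pos volume _ one_pos).ne' measure_ball_lt_top.ne
  rw [Cn, unitSphereArea]
  field_simp
  ring

/-- Let `Ω ⊆ ℝⁿ` be open and bounded, `δ, c > 0`, `1 ≤ p ≤ ∞` with
conjugate exponent `q`, and let `u` be smooth on `Ω` with `Δu ≥ 1` on `Ω`. If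
`‖u‖_{L^p(Ω)} · |{y ∈ Ω : |u(y)| ≥ c}|^(1/q) ≤ c`, then for every `x ∈ Ω` at distance at
least `δ` from the boundary, `u(x) ≤ (1 + |B_{δ/2}|⁻¹) c − (Cₙ/8) δ²`. -/
theorem pointwise_bound_from_small_product (n : ℕ) (hn : 0 < n)
    (Ω : Set (EuclideanSpace ℝ (Fin n))) (hΩo : IsOpen Ω) (hΩb : Bornology.IsBounded Ω)
    (δ c : ℝ) (hδ : 0 < δ) (hc : 0 < c)
    (p q : ℝ≥0∞) (hp : 1 ≤ p) (hpq : 1 / p + 1 / q = 1)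
    (u : EuclideanSpace ℝ (Fin n) → ℝ) (hu : ContDiffOn ℝ (⊤ : ℕ∞) u Ω)
    (hlap : ∀ x ∈ Ω, 1 ≤ laplacian u x)
    (hsmall : eLpNorm u p (volume.restrict Ω) *
        volume {y ∈ Ω | c ≤ |u y|} ^ (1 / q).toReal ≤ ENNReal.ofReal c) :
    ∀ x ∈ Ω, δ ≤ infDist x Ωᶜ →
      u x ≤ (1 + ((volume (ball (0 : EuclideanSpace ℝ (Fin n)) (δ / 2))).toReal)⁻¹) * c -
        Cn n / 8 * δ ^ 2 := by
  intro x _ hdist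
  have : HolderConjugate p q := ⟨by simpa using hpq⟩
  have hu₂ : ContDiffOn ℝ 2 u Ω := hu.of_le (WithTop.coe_le_coe.2 (le_top : (2 : ℕ∞) ≤ ⊤))
  have hΔ (y) (hy : y ∈ Ω) : 1 ≤ Δ u y :=
    laplacian_eq_laplacian_euclideanSpace (hu₂.contDiffAt (hΩo.mem_nhds hy)) ▸ hlap y hy
  have hball : closedBall x (δ / 2) ⊆ Ω :=
    (closedBall_subset_ball (by linarith)).trans ball_infDist_compl_subset
  convert! pointwise_bound_from_small_product_general hΩo (half_pos hδ) hc.le hu₂ hΔ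
    (by simpa using hsmall) hball using 2
  rw [Cn_eq_one_div hn, finrank_euclideanSpace_fin]
  field_simp
  ring
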